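/- For every n ≥ 1 and every t ∈ ℝ, the logarithmic derivatives of the recurrence coefficients β_k satisfy Σ_{k=1}^{n} β_k'(t)/β_k(t) = −p·α_{n+1}(t) + q·α_{n+1}(t)/( β_{n+1}(t)·β_n(t) ). -/

import Mathlib

open Polynomial

/-- The moment functional `L^{(t)}` applied to `x^m · P(x)`, where the moments are
`L^{(t)}[x^k] = ν k t`. -/
noncomputable def Lmom (ν : ℤ → ℝ → ℂ) (m : ℤ) (P : Polynomial ℂ) (t : ℝ) : ℂ :=
  P.sum fun j c => c * ν (m + (j : ℤ)) t

theorem Lmom_range (ν : ℤ → ℝ → ℂ) (m : ℤ) (P : Polynomial ℂ) (t : ℝ) (N : ℕ)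
    (h : P.natDegree < N) :
    Lmom ν m P t = ∑ j ∈ Finset.range N, P.coeff j * ν (m + (j : ℤ)) t := by
  unfold Lmom
  exact Polynomial.sum_over_range' P (by simp) N h

theorem Lmom_add (ν : ℤ → ℝ → ℂ) (m : ℤ) (P R : Polynomial ℂ) (t : ℝ) :
    Lmom ν m (P + R) t = Lmom ν m P t + Lmom ν m R t := by
  unfold Lmom
  exact Polynomial.sum_add_index P R _ (by simp) (by intros; ring)

theorem Lmom_C_mul (ν : ℤ → ℝ → ℂ) (m : ℤ) (c : ℂ) (P : Polynomial ℂ) (t : ℝ) :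
    Lmom ν m (C c * P) t = c * Lmom ν m P t := by
  have h : (C c * P).natDegree < P.natDegree + 1 :=
    Nat.lt_succ_of_le (Polynomial.natDegree_C_mul_le c P)
  rw [Lmom_range ν m _ t _ h, Lmom_range ν m P t _ (Nat.lt_succ_self _), Finset.mul_sum]
  refine Finset.sum_congr rfl fun j _ => ?_
  rw [Polynomial.coeff_C_mul]; ring

theorem Lmom_sub (ν : ℤ → ℝ → ℂ) (m : ℤ) (P R : Polynomial ℂ) (t : ℝ) :
    Lmom ν m (P - R) t = Lmom ν m P t - Lmom ν m R t := by
  have : P - R = P + C (-1) * R := by simp [sub_eq_add_neg]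
  rw [this, Lmom_add, Lmom_C_mul]; ring

theorem Lmom_X_mul (ν : ℤ → ℝ → ℂ) (m : ℤ) (P : Polynomial ℂ) (t : ℝ) :
    Lmom ν m (X * P) t = Lmom ν (m + 1) P t := by
  have h : (X * P).natDegree < P.natDegree + 1 + 1 := by
    have := Polynomial.natDegree_mul_le (p := (X : Polynomial ℂ)) (q := P)
    rw [Polynomial.natDegree_X] at this
    omega
  rw [Lmom_range ν m _ t _ h, Lmom_range ν (m+1) P t _ (Nat.lt_succ_self _),
    Finset.sum_range_succ']
  simp only [Polynomial.coeff_X_mul, Polynomial.coeff_X_mul_zero, zero_mul, add_zero]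
  refine Finset.sum_congr rfl fun j _ => ?_
  congr 2
  push_cast; ring

theorem Lmom_one (ν : ℤ → ℝ → ℂ) (m : ℤ) (t : ℝ) : Lmom ν m 1 t = ν m t := by
  rw [Lmom_range ν m 1 t 1 (by simp)]
  simp

/-- Uniqueness: a polynomial of degree less than `m` killed by `m` moments is zero. -/
theorem Lmom_unique (ν : ℤ → ℝ → ℂ) (t : ℝ) (Q : ℕ → Polynomial ℂ)
    (hQmonic : ∀ n, (Q n).Monic) (hQdeg : ∀ n, (Q n).natDegree = n)
    (horth : ∀ n : ℕ, ∀ j : ℕ, 1 ≤ j → j ≤ n → Lmom ν (-(j : ℤ)) (Q n) t = 0)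
    (hg : ∀ n : ℕ, Lmom ν (-((n + 1 : ℕ) : ℤ)) (Q n) t ≠ 0) (m : ℕ) :
    ∀ R : Polynomial ℂ, (∀ j, m ≤ j → R.coeff j = 0) →
      (∀ j : ℕ, 1 ≤ j → j ≤ m → Lmom ν (-(j : ℤ)) R t = 0) → R = 0 := by
  induction m with
  | zero =>
    intro R h _
    ext j
    simpa using h j (Nat.zero_le j)
  | succ m ih =>
    intro R h hR
    have key : R - C (R.coeff m) * Q m = 0 := by
      apply ih
      · intro j hj
        rw [Polynomial.coeff_sub, Polynomial.coeff_C_mul]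
        rcases hj.eq_or_lt with rfl | hlt
        · have : (Q m).coeff m = 1 := by
            have := hQmonic m
            rwa [Polynomial.Monic, Polynomial.leadingCoeff, hQdeg] at this
          rw [this]; ring
        · rw [h j hlt, Polynomial.coeff_eq_zero_of_natDegree_lt (p := Q m) (by rw [hQdeg]; exact hlt)]
          ring
      · intro j h1 h2
        rw [Lmom_sub, Lmom_C_mul, hR j h1 (by omega), horth m j h1 h2]; ring
    have hR' : R = C (R.coeff m) * Q m := sub_eq_zero.mp key
    have h1 := hR (m + 1) (by omega) le_rfl
    rw [hR', Lmom_C_mul] at h1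
    have hc : R.coeff m = 0 := (mul_eq_zero.mp h1).resolve_right (hg m)
    rw [hR', hc]; simp

theorem stmt_8 (p q : ℂ) (ν : ℤ → ℝ → ℂ)
    (hνdiff : ∀ k, Differentiable ℝ (ν k))
    (hνderiv : ∀ k t, deriv (ν k) t = -(p * ν (k + 1) t + q * ν (k - 1) t))
    (hν0 : ∀ t, ν 0 t ≠ 0)
    (Q : ℕ → ℝ → Polynomial ℂ)
    (hQ0 : ∀ t, Q 0 t = 1)
    (hQmonic : ∀ n t, (Q n t).Monic)
    (hQdeg : ∀ n t, (Q n t).natDegree = n)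
    (hQdiff : ∀ n j, Differentiable ℝ fun t => (Q n t).coeff j)
    (β α : ℕ → ℝ → ℂ)
    (hβdiff : ∀ n, Differentiable ℝ (β n))
    (hαdiff : ∀ n, Differentiable ℝ (α n))
    (hβ0 : ∀ t, β 0 t = 1) (hα0 : ∀ t, α 0 t = -1) (hα1 : ∀ t, α 1 t = 0)
    (hβne : ∀ n, 1 ≤ n → ∀ t, β n t ≠ 0)
    (hαne : ∀ n, 1 ≤ n → ∀ t, α (n + 1) t ≠ 0)
    (horth : ∀ n : ℕ, 1 ≤ n → ∀ s < n, ∀ t : ℝ, Lmom ν (-(n : ℤ) + (s : ℤ)) (Q n t) t = 0)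
    (hQ1 : ∀ t, Q 1 t = X - C (β 1 t))
    (hrec : ∀ n, 1 ≤ n → ∀ t,
      Q (n + 1) t = (X - C (β (n + 1) t)) * Q n t - C (α (n + 1) t) * (X * Q (n - 1) t)) :
    ∀ n, 1 ≤ n → ∀ t : ℝ,
      ∑ k ∈ Finset.Icc 1 n, deriv (β k) t / β k t =
        -p * α (n + 1) t + q * α (n + 1) t / (β (n + 1) t * β n t) := by
  classical
  have horth' : ∀ t, ∀ n : ℕ, ∀ j : ℕ, 1 ≤ j → j ≤ n → Lmom ν (-(j : ℤ)) (Q n t) t = 0 := by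
    intro t n j h1 h2
    have := horth n (by omega) (n - j) (by omega) t
    rwa [show -(n : ℤ) + ((n - j : ℕ) : ℤ) = -(j : ℤ) by push_cast [Nat.cast_sub h2]; ring] at this
  -- recurrence under the functional
  have hLrec : ∀ t, ∀ n : ℕ, ∀ m : ℤ, Lmom ν m (Q (n + 2) t) t =
      Lmom ν (m + 1) (Q (n + 1) t) t - β (n + 2) t * Lmom ν m (Q (n + 1) t) t
        - α (n + 2) t * Lmom ν (m + 1) (Q n t) t := by
    intro t n m
    rw [hrec (n + 1) (by omega) t, sub_mul, Lmom_sub, Lmom_sub, Lmom_C_mul, Lmom_C_mul,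
      Lmom_X_mul, Lmom_X_mul]
    simp
  have hh : ∀ t, ∀ n : ℕ, Lmom ν 0 (Q (n + 1) t) t = α (n + 2) t * Lmom ν 0 (Q n t) t := by
    intro t n
    have h1 := hLrec t n (-1)
    have h2 := horth' t (n + 2) 1 le_rfl (by omega)
    have h3 := horth' t (n + 1) 1 le_rfl (by omega)
    norm_num at h1 h2 h3
    rw [h2, h3] at h1
    linear_combination -h1
  have hgrec : ∀ t, ∀ n : ℕ, β (n + 2) t * Lmom ν (-((n + 2 : ℕ) : ℤ)) (Q (n + 1) t) t =
      - α (n + 2) t * Lmom ν (-((n + 1 : ℕ) : ℤ)) (Q n t) t := by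
    intro t n
    have h1 := hLrec t n (-((n + 2 : ℕ) : ℤ))
    have h2 := horth' t (n + 2) (n + 2) (by omega) (by omega)
    have h3 := horth' t (n + 1) (n + 1) (by omega) (by omega)
    rw [show -((n + 2 : ℕ) : ℤ) + 1 = -((n + 1 : ℕ) : ℤ) by push_cast; ring, h2, h3] at h1
    linear_combination h1
  have hhne : ∀ t, ∀ n : ℕ, Lmom ν 0 (Q n t) t ≠ 0 := by
    intro t n
    induction n with
    | zero => rw [hQ0, Lmom_one]; exact hν0 t
    | succ n ih => rw [hh]; exact mul_ne_zero (hαne (n + 1) (by omega) t) ih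
  have hgne : ∀ t, ∀ n : ℕ, Lmom ν (-((n + 1 : ℕ) : ℤ)) (Q n t) t ≠ 0 := by
    intro t n
    induction n with
    | zero =>
      have h1 := horth' t 1 1 le_rfl le_rfl
      have e : (X - C (β 1 t) : Polynomial ℂ) = X * 1 - C (β 1 t) * 1 := by simp
      rw [hQ1, e, Lmom_sub, Lmom_C_mul, Lmom_X_mul, Lmom_one, Lmom_one] at h1
      rw [hQ0, Lmom_one]
      intro h0
      norm_num at h0 h1
      rw [h0] at h1
      exact hν0 t (by simpa using h1)
    | succ n ih =>
      intro h0
      have := hgrec t n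
      rw [h0, mul_zero] at this
      exact mul_ne_zero (neg_ne_zero.mpr (hαne (n + 1) (by omega) t)) ih this.symm
  -- constant coefficients
  have ha : ∀ t, ∀ n : ℕ, (Q (n + 1) t).coeff 0 = -β (n + 1) t * (Q n t).coeff 0 := by
    intro t n
    rcases n with _ | n
    · rw [hQ1, hQ0]; simp
    · rw [hrec (n + 1) (by omega) t]
      simp [sub_mul]
  have hane : ∀ t, ∀ n : ℕ, (Q n t).coeff 0 ≠ 0 := by
    intro t n
    induction n with
    | zero => rw [hQ0]; simp
    | succ n ih => rw [ha]; exact mul_ne_zero (neg_ne_zero.mpr (hβne (n + 1) (by omega) t)) ih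
  have hlog : ∀ t, ∀ n : ℕ, deriv (fun t => (Q n t).coeff 0) t =
      (Q n t).coeff 0 * ∑ k ∈ Finset.Icc 1 n, deriv (β k) t / β k t := by
    intro t n
    induction n with
    | zero => simp [hQ0]
    | succ n ih =>
      have e : (fun t => (Q (n + 1) t).coeff 0) = fun t => -β (n + 1) t * (Q n t).coeff 0 := by
        funext t; exact ha t n
      have hd : HasDerivAt (fun t => -β (n + 1) t * (Q n t).coeff 0)
          (-deriv (β (n + 1)) t * (Q n t).coeff 0
            + -β (n + 1) t * deriv (fun t => (Q n t).coeff 0) t) t :=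
        ((hβdiff (n + 1) t).hasDerivAt.neg).mul ((hQdiff n 0 t).hasDerivAt)
      rw [e, hd.deriv, ih, Finset.sum_Icc_succ_top (by omega), ha]
      have := hβne (n + 1) (by omega) t
      field_simp
      ring
  intro n hn t
  obtain ⟨n, rfl⟩ : ∃ k, n = k + 1 := ⟨n - 1, by omega⟩
  -- the t-derivative of Q
  obtain ⟨D, hD⟩ : ∃ D : Polynomial ℂ, ∀ j, D.coeff j =
      deriv (fun t => (Q (n + 1) t).coeff j) t := by
    refine ⟨∑ i ∈ Finset.range (n + 2),
      C (deriv (fun t => (Q (n + 1) t).coeff i) t) * X ^ i, fun j => ?_⟩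
    rw [Polynomial.finsetSum_coeff]
    simp only [Polynomial.coeff_C_mul_X_pow]
    rw [Finset.sum_ite_eq]
    split_ifs with hj
    · rfl
    · have : (fun t => (Q (n + 1) t).coeff j) = fun _ => 0 := by
        funext s
        apply Polynomial.coeff_eq_zero_of_natDegree_lt
        rw [hQdeg]
        simp at hj; omega
      rw [this]; simp
  have hDtop : ∀ j, n + 1 ≤ j → D.coeff j = 0 := by
    intro j hj
    rw [hD]
    rcases hj.eq_or_lt with rfl | hlt
    · have : (fun t => (Q (n + 1) t).coeff (n + 1)) = fun _ => 1 := by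
        funext s
        have := hQmonic (n + 1) s
        rwa [Polynomial.Monic, Polynomial.leadingCoeff, hQdeg] at this
      rw [this]; simp
    · have : (fun t => (Q (n + 1) t).coeff j) = fun _ => 0 := by
        funext s
        apply Polynomial.coeff_eq_zero_of_natDegree_lt
        rw [hQdeg]; exact hlt
      rw [this]; simp
  have hDdeg : D.natDegree < n + 2 := by
    have : D.natDegree ≤ n + 1 :=
      Polynomial.natDegree_le_iff_coeff_eq_zero.mpr fun j hj => hDtop j (by omega)
    omega
  have hLD : ∀ m : ℤ, HasDerivAt (fun s => Lmom ν m (Q (n + 1) s) s)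
      (Lmom ν m D t - p * Lmom ν (m + 1) (Q (n + 1) t) t
        - q * Lmom ν (m - 1) (Q (n + 1) t) t) t := by
    intro m
    have hdeg : ∀ s, (Q (n + 1) s).natDegree < n + 2 := fun s => by rw [hQdeg]; omega
    have e : (fun s => Lmom ν m (Q (n + 1) s) s) =
        fun s => ∑ j ∈ Finset.range (n + 2), (Q (n + 1) s).coeff j * ν (m + (j : ℤ)) s := by
      funext s; exact Lmom_range ν m _ s _ (hdeg s)
    rw [e, Lmom_range ν m D t _ hDdeg, Lmom_range ν (m + 1) _ t _ (hdeg t),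
      Lmom_range ν (m - 1) _ t _ (hdeg t), Finset.mul_sum, Finset.mul_sum,
      ← Finset.sum_sub_distrib, ← Finset.sum_sub_distrib]
    apply HasDerivAt.fun_sum
    intro j _
    have hd := ((hQdiff (n + 1) j t).hasDerivAt).mul ((hνdiff (m + (j : ℤ)) t).hasDerivAt)
    refine hd.congr_deriv ?_
    rw [hD, hνderiv, show m + 1 + (j : ℤ) = m + (j : ℤ) + 1 by ring,
      show m - 1 + (j : ℤ) = m + (j : ℤ) - 1 by ring]
    ring
  have hDorth : ∀ j : ℕ, 1 ≤ j → j ≤ n + 1 → Lmom ν (-(j : ℤ)) D t =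
      p * Lmom ν (-(j : ℤ) + 1) (Q (n + 1) t) t + q * Lmom ν (-(j : ℤ) - 1) (Q (n + 1) t) t := by
    intro j h1 h2
    have hd := (hLD (-(j : ℤ))).deriv
    have e : (fun s => Lmom ν (-(j : ℤ)) (Q (n + 1) s) s) = fun _ => 0 := by
      funext s; exact horth' s (n + 1) j h1 h2
    rw [e, deriv_const] at hd
    linear_combination -hd
  -- the structure relation
  have hzero : D - (C (-p * α (n + 2) t) * (Q (n + 1) t - X * Q n t)
      + C (q * (-α (n + 2) t / β (n + 2) t)) * Q n t) = 0 := by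
    apply Lmom_unique ν t (fun n => Q n t) (fun n => hQmonic n t) (fun n => hQdeg n t)
      (horth' t) (hgne t) (n + 1)
    · intro j hj
      have hj0 : (Q n t).coeff j = 0 :=
        Polynomial.coeff_eq_zero_of_natDegree_lt (by rw [hQdeg]; omega)
      have hmon : ∀ k, (Q k t).coeff k = 1 := fun k => by
        have := hQmonic k t
        rwa [Polynomial.Monic, Polynomial.leadingCoeff, hQdeg] at this
      have hj1 : (Q (n + 1) t - X * Q n t).coeff j = 0 := by
        obtain ⟨i, rfl⟩ : ∃ i, j = i + 1 := ⟨j - 1, by omega⟩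
        rw [Polynomial.coeff_sub, Polynomial.coeff_X_mul]
        rcases hj.eq_or_lt with h | hlt
        · obtain rfl : n = i := by omega
          rw [hmon, hmon, sub_self]
        · rw [Polynomial.coeff_eq_zero_of_natDegree_lt (by rw [hQdeg]; omega),
            Polynomial.coeff_eq_zero_of_natDegree_lt (by rw [hQdeg]; omega), sub_self]
      rw [Polynomial.coeff_sub, Polynomial.coeff_add, Polynomial.coeff_C_mul,
        Polynomial.coeff_C_mul, hj0, hj1, hDtop j hj]
      ring
    · intro j h1 h2
      rw [Lmom_sub, Lmom_add, Lmom_C_mul, Lmom_C_mul, Lmom_sub, Lmom_X_mul, hDorth j h1 h2,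
        horth' t (n + 1) j h1 h2]
      have hb := hβne (n + 2) (by omega) t
      have A : Lmom ν (-(j : ℤ) + 1) (Q (n + 1) t) t
          = α (n + 2) t * Lmom ν (-(j : ℤ) + 1) (Q n t) t := by
        rcases h1.eq_or_lt with rfl | hlt
        · simpa using hh t n
        · obtain ⟨i, rfl⟩ : ∃ i, j = i + 1 := ⟨j - 1, by omega⟩
          rw [show -((i + 1 : ℕ) : ℤ) + 1 = -(i : ℤ) by push_cast; ring,
            horth' t (n + 1) i (by omega) (by omega), horth' t n i (by omega) (by omega), mul_zero]
      have B : β (n + 2) t * Lmom ν (-(j : ℤ) - 1) (Q (n + 1) t) t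
          = -α (n + 2) t * Lmom ν (-(j : ℤ)) (Q n t) t := by
        rw [show -(j : ℤ) - 1 = -((j + 1 : ℕ) : ℤ) by push_cast; ring]
        rcases h2.eq_or_lt with rfl | hlt
        · exact hgrec t n
        · rw [horth' t (n + 1) (j + 1) (by omega) (by omega), horth' t n j h1 (by omega)]
          ring
      have B' : Lmom ν (-(j : ℤ) - 1) (Q (n + 1) t) t
          = -α (n + 2) t / β (n + 2) t * Lmom ν (-(j : ℤ)) (Q n t) t := by
        field_simp
        linear_combination B
      rw [A, B']
      ring
  have hfin := congrArg (fun P : Polynomial ℂ => P.coeff 0) hzero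
  simp only [Polynomial.coeff_sub, Polynomial.coeff_add, Polynomial.coeff_C_mul,
    Polynomial.coeff_X_mul_zero, Polynomial.coeff_zero, hD, hlog] at hfin
  rw [ha] at hfin
  have h0 := hane t n
  have hb1 := hβne (n + 1) (by omega) t
  have hb2 := hβne (n + 2) (by omega) t
  apply mul_left_cancel₀ (mul_ne_zero hb1 h0)
  have e : β (n + 1) t * (Q n t).coeff 0 * (-p * α (n + 1 + 1) t
      + q * α (n + 1 + 1) t / (β (n + 1 + 1) t * β (n + 1) t)) =
      β (n + 1) t * (Q n t).coeff 0 * (-p * α (n + 2) t)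
      + q * (α (n + 2) t / β (n + 2) t) * (Q n t).coeff 0 := by
    field_simp
  rw [e]
  linear_combination -hfin
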